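/- Let n ≥ 2. There is no absolute constant c > 0 such that j_G(x,y) ≥ c·ĵ_G(x,y) holds for every proper subdomain G of ℝⁿ and all x,y ∈ G. More precisely: for every c > 0 there exist a point a ∈ ℝⁿ and distinct points x, y ∈ ℝⁿ \ {a} such that, for the punctured space G_a = ℝⁿ \ {a} (whose boundary in S̄ⁿ is {a, ∞}), one has j_{G_a}(x,y) < c·ĵ_{G_a}(x,y), where j_{G_a}(x,y) = log(1 + |x−y|/min(|x−a|,|y−a|)) and ĵ_{G_a}(x,y) = log(1 + q(x,y)/min{q(x,a), q(y,a), 1/σ(x), 1/σ(y)}). -/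

import Mathlib

/-- `σ(x) = √(1 + |x|²)`. -/
noncomputable def sigmaFn {n : ℕ} (x : EuclideanSpace ℝ (Fin n)) : ℝ :=
  Real.sqrt (1 + ‖x‖ ^ 2)

/-- The chordal (spherical) distance between two finite points of the Möbius space
`S̄ⁿ = ℝⁿ ∪ {∞}`: `q(x,y) = |x−y|/(σ(x)σ(y))`. Recall `q(x,∞) = 1/σ(x)`. -/
noncomputable def chordal {n : ℕ} (x y : EuclideanSpace ℝ (Fin n)) : ℝ :=
  ‖x - y‖ / (sigmaFn x * sigmaFn y)

/-!
Keep two distinct points `x`, `y` and let the puncture `a` tend to infinity. The Euclidean metric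
`j` sees only the puncture, so it tends to `0`. The chordal metric `ĵ` also sees the boundary point
`∞`, whose chordal distance to `y` is `1 / σ(y)`; hence
`ĵ ≥ log (1 + q(x,y) σ(y)) = log (1 + |x - y| / σ(x))`, a positive bound independent of `a`.
-/

open Filter Topology Bornology

/-- The distance-ratio metric `j_G` of the punctured space `G = E \ {a}`. -/
noncomputable def puncturedJ {E : Type*} [SeminormedAddCommGroup E] (a x y : E) : ℝ :=
  Real.log (1 + ‖x - y‖ / min ‖x - a‖ ‖y - a‖)

/-- The chordal distance-ratio metric `ĵ_G` of the punctured space `G = ℝⁿ \ {a}`. The boundary of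
`G` in the Möbius space is `{a, ∞}`, and `1 / σ` is the chordal distance to `∞`. -/
noncomputable def puncturedJHat {n : ℕ} (a x y : EuclideanSpace ℝ (Fin n)) : ℝ :=
  Real.log (1 + chordal x y /
    min (min (chordal x a) (chordal y a)) (min (1 / sigmaFn x) (1 / sigmaFn y)))

theorem tendsto_puncturedJ_cobounded {E : Type*} [SeminormedAddCommGroup E] (x y : E) :
    Tendsto (fun a ↦ puncturedJ a x y) (cobounded E) (𝓝 0) := by
  have hmin : Tendsto (fun a ↦ min ‖x - a‖ ‖y - a‖) (cobounded E) atTop := by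
    simp only [← dist_eq_norm]
    exact tendsto_inf_atTop _ (Metric.tendsto_dist_left_cobounded_atTop x)
      (Metric.tendsto_dist_left_cobounded_atTop y)
  have hquot : Tendsto (fun a ↦ 1 + ‖x - y‖ / min ‖x - a‖ ‖y - a‖) (cobounded E) (𝓝 1) := by
    simpa only [add_zero] using (hmin.const_div_atTop ‖x - y‖).const_add 1
  simpa only [puncturedJ, Real.log_one] using hquot.log one_ne_zero

section Chordal

variable {n : ℕ} {a x y : EuclideanSpace ℝ (Fin n)}

theorem sigmaFn_pos (x : EuclideanSpace ℝ (Fin n)) : 0 < sigmaFn x := by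
  unfold sigmaFn
  positivity

theorem chordal_pos (h : x ≠ y) : 0 < chordal x y :=
  div_pos (norm_sub_pos_iff.mpr h) (mul_pos (sigmaFn_pos x) (sigmaFn_pos y))

theorem chordal_div_one_div_sigmaFn (x y : EuclideanSpace ℝ (Fin n)) :
    chordal x y / (1 / sigmaFn y) = ‖x - y‖ / sigmaFn x := by
  have hx := (sigmaFn_pos x).ne'
  have hy := (sigmaFn_pos y).ne'
  unfold chordal
  field_simp

theorem log_one_add_div_sigmaFn_le_puncturedJHat (hx : x ≠ a) (hy : y ≠ a) :
    Real.log (1 + ‖x - y‖ / sigmaFn x) ≤ puncturedJHat a x y := by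
  have hσx := sigmaFn_pos x
  have hσy := sigmaFn_pos y
  have hmin_pos : 0 < min (min (chordal x a) (chordal y a))
      (min (1 / sigmaFn x) (1 / sigmaFn y)) :=
    lt_min (lt_min (chordal_pos hx) (chordal_pos hy))
      (lt_min (one_div_pos.mpr hσx) (one_div_pos.mpr hσy))
  have hchordal : 0 ≤ chordal x y := by
    unfold chordal
    positivity
  rw [← chordal_div_one_div_sigmaFn, puncturedJHat]
  gcongr
  exact (min_le_right _ _).trans (min_le_right _ _)

theorem no_reverse_constant_general (hxy : x ≠ y) {c : ℝ} (hc : 0 < c) :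
    ∀ᶠ a in cobounded (EuclideanSpace ℝ (Fin n)),
      x ≠ a ∧ y ≠ a ∧ puncturedJ a x y < c * puncturedJHat a x y := by
  have hbound : 0 < c * Real.log (1 + ‖x - y‖ / sigmaFn x) :=
    mul_pos hc <| Real.log_pos <| lt_add_of_pos_right 1 <|
      div_pos (norm_sub_pos_iff.mpr hxy) (sigmaFn_pos x)
  filter_upwards [eventually_ne_cobounded x, eventually_ne_cobounded y,
    (tendsto_puncturedJ_cobounded x y).eventually_lt_const hbound] with a hax hay hj
  refine ⟨hax.symm, hay.symm, hj.trans_le ?_⟩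
  gcongr
  exact log_one_add_div_sigmaFn_le_puncturedJHat hax.symm hay.symm

end Chordal

/-- There is no absolute constant `c > 0` with `j_G ≥ c·ĵ_G` for all proper
subdomains `G` of `ℝⁿ`: for every `c > 0` there are a point `a ∈ ℝⁿ` and distinct
points `x, y ∈ ℝⁿ \ {a}` such that, for the punctured space `G_a = ℝⁿ \ {a}`
(whose boundary in `S̄ⁿ` is `{a, ∞}`), one has `j_{G_a}(x,y) < c·ĵ_{G_a}(x,y)`. -/
theorem no_reverse_constant {n : ℕ} (hn : 2 ≤ n) (c : ℝ) (hc : 0 < c) :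
    ∃ a x y : EuclideanSpace ℝ (Fin n), x ≠ a ∧ y ≠ a ∧ x ≠ y ∧
      Real.log (1 + ‖x - y‖ / min ‖x - a‖ ‖y - a‖) <
        c * Real.log (1 + chordal x y /
          min (min (chordal x a) (chordal y a))
              (min (1 / sigmaFn x) (1 / sigmaFn y))) := by
  have : Nonempty (Fin n) := ⟨⟨0, by lia⟩⟩
  obtain ⟨x, y, hxy⟩ := exists_pair_ne (EuclideanSpace ℝ (Fin n))
  obtain ⟨a, hxa, hya, hlt⟩ := (no_reverse_constant_general hxy hc).exists
  exact ⟨a, x, y, hxa, hya, hxy, hlt⟩
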